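/- arXiv:1612.07227 — 2 statements merged into one kernel-verified Lean document; each statement's English description precedes it below -/
import Mathlib

section
/- Let G be a group with generating set X such that the Cayley graph Γ(G,X) is hyperbolic, and let H_1, H_2 be subgroups each hyperbolically embedded in (G,X). Then for every R ≥ 0, the Hausdorff distance with respect to d_X between the sets H_1 ∩ N_R(H_2) and H_1 ∩ H_2 is finite. -/
open Pointwise

section BasicDefs

variable {G : Type*} [Group G]

/-- The word length of `g` with respect to the generating set `S`
(words use letters from `S ∪ S⁻¹`). -/
noncomputable def wordLength (S : Set G) (g : G) : ℕ :=
  sInf {n : ℕ | ∃ l : List G, l.length = n ∧ (∀ x ∈ l, x ∈ S ∨ x⁻¹ ∈ S) ∧ l.prod = g}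

/-- The word metric on `G` with respect to the generating set `S`. -/
noncomputable def wordDist (S : Set G) (g h : G) : ℝ :=
  (wordLength S (g⁻¹ * h) : ℝ)

/-- The closed `r`-neighborhood of a subset `A` with respect to the word metric `d_S`. -/
def nbhd (S : Set G) (r : ℝ) (A : Set G) : Set G :=
  {g : G | ∃ a ∈ A, wordDist S g a ≤ r}

/-- The distance between two subsets: the infimum of distances between their elements. -/
noncomputable def setDist (S : Set G) (A B : Set G) : ℝ :=
  sInf {r : ℝ | ∃ a ∈ A, ∃ b ∈ B, r = wordDist S a b}

/-- The conjugate subgroup `H^g = g H g⁻¹`. -/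
def conjSub (g : G) (H : Subgroup G) : Subgroup G :=
  H.map (MulAut.conj g).toMonoidHom

end BasicDefs

/-- `γ` restricted to `{0, …, n}` is a `(K, ε)`-quasigeodesic for the distance function `d`. -/
def IsQuasigeodesic {α : Type*} (d : α → α → ℝ) (K ε : ℝ) (n : ℕ) (γ : ℕ → α) : Prop :=
  ∀ i j : ℕ, i ≤ n → j ≤ n →
    (1 / K) * |(i : ℝ) - (j : ℝ)| - ε ≤ d (γ i) (γ j) ∧
      d (γ i) (γ j) ≤ K * |(i : ℝ) - (j : ℝ)| + ε

/-- `γ` restricted to `{0, …, n}` is a geodesic for the distance function `d`. -/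
def IsGeodesic {α : Type*} (d : α → α → ℝ) (n : ℕ) (γ : ℕ → α) : Prop :=
  ∀ i j : ℕ, i ≤ n → j ≤ n → d (γ i) (γ j) = |(i : ℝ) - (j : ℝ)|

/-- The path `γ` (on `{0, …, n}`) is `f`-stable: every `(K, ε)`-quasigeodesic with endpoints
on `γ` stays in the `f K ε`-neighborhood of `γ`. -/
def IsStablePath {α : Type*} (d : α → α → ℝ) (f : ℝ → ℝ → ℝ) (n : ℕ) (γ : ℕ → α) : Prop :=
  ∀ K ε : ℝ, 1 ≤ K → 0 ≤ ε → ∀ (m : ℕ) (η : ℕ → α),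
    IsQuasigeodesic d K ε m η →
    (∃ i ≤ n, η 0 = γ i) → (∃ i ≤ n, η m = γ i) →
    ∀ j ≤ m, ∃ i ≤ n, d (η j) (γ i) ≤ f K ε

/-- The Gromov product `⟨x, y⟩_w` with respect to a distance function `d`. -/
noncomputable def gromovProd {α : Type*} (d : α → α → ℝ) (w x y : α) : ℝ :=
  (d w x + d w y - d x y) / 2

/-- Gromov hyperbolicity of a distance function, via the four-point condition. -/
def IsHyperbolicDist {α : Type*} (d : α → α → ℝ) : Prop :=
  ∃ δ : ℝ, 0 ≤ δ ∧ ∀ w x y z : α,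
    min (gromovProd d w x y) (gromovProd d w y z) - δ ≤ gromovProd d w x z

section GroupDefs

variable {G : Type*} [Group G]

/-- `H` is a stable subgroup of `(G, d_S)` with stability function `f`: `H` has a finite
generating set `T` such that the inclusion `(H, d_T) → (G, d_S)` is a quasi-isometric
embedding sending every `d_T`-geodesic to an `f`-stable quasigeodesic of `(G, d_S)`. -/
def IsStableSubgroupWith (S : Set G) (H : Subgroup G) (f : ℝ → ℝ → ℝ) : Prop :=
  ∃ T : Set H, T.Finite ∧ Subgroup.closure T = ⊤ ∧
    (∃ μ c : ℝ, 1 ≤ μ ∧ 0 ≤ c ∧ ∀ h₁ h₂ : H,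
      (1 / μ) * wordDist T h₁ h₂ - c ≤ wordDist S (h₁ : G) (h₂ : G) ∧
        wordDist S (h₁ : G) (h₂ : G) ≤ μ * wordDist T h₁ h₂ + c) ∧
    ∀ (n : ℕ) (γ : ℕ → H), IsGeodesic (wordDist T) n γ →
      (∃ K ε : ℝ, 1 ≤ K ∧ 0 ≤ ε ∧
        IsQuasigeodesic (wordDist S) K ε n (fun i => (γ i : G))) ∧
      IsStablePath (wordDist S) f n (fun i => (γ i : G))

/-- `H` is a stable subgroup of `(G, d_S)`. -/
def IsStableSubgroup (S : Set G) (H : Subgroup G) : Prop :=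
  ∃ f : ℝ → ℝ → ℝ, IsStableSubgroupWith S H f

/-- The family `Q` of subgroups is hyperbolically embedded in `(G, X)`:
(Q1) geometric separation, (Q2) finite generation, (Q3) uniform quasi-isometric embedding. -/
def IsHypEmbFamily {G : Type*} [Group G] {ι : Type*} (X : Set G) (Q : ι → Subgroup G) : Prop :=
  (∀ ε : ℝ, 0 < ε → ∃ R : ℝ, ∀ (g : G) (i j : ι),
      (∃ a ∈ (Q i : Set G) ∩ nbhd X ε (g • (Q j : Set G)),
        ∃ b ∈ (Q i : Set G) ∩ nbhd X ε (g • (Q j : Set G)), R ≤ wordDist X a b) →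
      i = j ∧ g ∈ Q i) ∧
  ∃ Y : ι → Set G, (∀ i, (Y i).Finite ∧ Y i ⊆ (Q i : Set G) ∧ Subgroup.closure (Y i) = Q i) ∧
    ∃ μ c : ℝ, 1 ≤ μ ∧ 0 ≤ c ∧ ∀ i : ι, ∀ h ∈ Q i,
      (wordLength (Y i) h : ℝ) ≤ μ * (wordLength X h : ℝ) + c

/-- The subset `H` of `G` satisfies the WPD condition in `(G, X)`. -/
def WPDSet (X : Set G) (H : Set G) : Prop :=
  ∀ ε : ℝ, 0 < ε → ∃ N : ℝ, 0 < N ∧ ∀ h₁ h₂ : G, h₁ ∈ H → h₂ ∈ H →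
    N < wordDist X h₁ h₂ →
    {g : G | wordDist X h₁ (g * h₁) < ε ∧ wordDist X h₂ (g * h₂) < ε}.Finite

/-- A quasimorphism on `G`. -/
def IsQuasimorphism (q : G → ℝ) : Prop :=
  ∃ D : ℝ, 0 ≤ D ∧ ∀ x y : G, |q (x * y) - q x - q y| ≤ D

/-- A homogeneous quasimorphism on `G`. -/
def IsHomogeneousQM (q : G → ℝ) : Prop :=
  IsQuasimorphism q ∧ ∀ (x : G) (n : ℕ), q (x ^ n) = (n : ℝ) * q x

/-- `H` is a quasiconvex subgroup of `(G, d_S)`: every geodesic with endpoints in `H`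
lies in a uniformly bounded neighborhood of `H`. -/
def IsQuasiconvex (S : Set G) (H : Subgroup G) : Prop :=
  ∃ C : ℝ, 0 ≤ C ∧ ∀ (n : ℕ) (γ : ℕ → G), IsGeodesic (wordDist S) n γ →
    γ 0 ∈ H → γ n ∈ H → ∀ i ≤ n, ∃ h ∈ H, wordDist S (γ i) h ≤ C

end GroupDefs

/-! ### Basic properties of word length -/

section Aux

variable {G : Type*} [Group G]

theorem wl_le_of_list (S : Set G) (l : List G) (hl : ∀ x ∈ l, x ∈ S ∨ x⁻¹ ∈ S) :
    wordLength S l.prod ≤ l.length :=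
  Nat.sInf_le ⟨l, rfl, hl, rfl⟩

theorem wl_exists_list (S : Set G) {g : G} (hg : g ∈ Subgroup.closure S) :
    ∃ l : List G, l.length = wordLength S g ∧ (∀ x ∈ l, x ∈ S ∨ x⁻¹ ∈ S) ∧ l.prod = g := by
  have hg' : g ∈ Submonoid.closure (S ∪ S⁻¹) := by
    rw [← Subgroup.closure_toSubmonoid]; exact hg
  obtain ⟨l, hl, hp⟩ := Submonoid.exists_list_of_mem_closure hg'
  exact Nat.sInf_mem (s := {n : ℕ | ∃ l : List G, l.length = n ∧
    (∀ x ∈ l, x ∈ S ∨ x⁻¹ ∈ S) ∧ l.prod = g}) ⟨l.length, l, rfl, hl, hp⟩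

theorem wl_one (S : Set G) : wordLength S 1 = 0 := by
  have := wl_le_of_list S [] (by simp)
  simpa using this

theorem wl_mul_le (S : Set G) (hS : Subgroup.closure S = ⊤) (g h : G) :
    wordLength S (g * h) ≤ wordLength S g + wordLength S h := by
  obtain ⟨l, h1, h2, h3⟩ := wl_exists_list S (g := g) (by simp [hS])
  obtain ⟨m, k1, k2, k3⟩ := wl_exists_list S (g := h) (by simp [hS])
  have := wl_le_of_list S (l ++ m) (by
    intro x hx
    rcases List.mem_append.1 hx with hx | hx
    · exact h2 x hx
    · exact k2 x hx)
  rw [List.prod_append, h3, k3, List.length_append, h1, k1] at this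
  exact this

theorem wl_inv_le (S : Set G) (hS : Subgroup.closure S = ⊤) (g : G) :
    wordLength S g⁻¹ ≤ wordLength S g := by
  obtain ⟨l, h1, h2, h3⟩ := wl_exists_list S (g := g) (by simp [hS])
  have := wl_le_of_list S (l.map (fun x => x⁻¹)).reverse (by
    intro x hx
    simp only [List.mem_reverse, List.mem_map] at hx
    obtain ⟨y, hy, rfl⟩ := hx
    rcases h2 y hy with h | h
    · right; simpa using h
    · left; exact h)
  rw [← List.prod_inv_reverse, h3] at this
  simpa [h1] using this

theorem wl_inv (S : Set G) (hS : Subgroup.closure S = ⊤) (g : G) :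
    wordLength S g⁻¹ = wordLength S g :=
  le_antisymm (wl_inv_le S hS g) (by simpa using wl_inv_le S hS g⁻¹)

theorem wd_self (S : Set G) (g : G) : wordDist S g g = 0 := by simp [wordDist, wl_one]

theorem wd_nonneg (S : Set G) (g h : G) : 0 ≤ wordDist S g h := by simp [wordDist]

theorem wd_comm (S : Set G) (hS : Subgroup.closure S = ⊤) (g h : G) :
    wordDist S g h = wordDist S h g := by
  unfold wordDist
  rw [← wl_inv S hS]
  simp

theorem wd_tri (S : Set G) (hS : Subgroup.closure S = ⊤) (g h k : G) :
    wordDist S g k ≤ wordDist S g h + wordDist S h k := by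
  unfold wordDist
  have := wl_mul_le S hS (g⁻¹ * h) (h⁻¹ * k)
  have e : g⁻¹ * h * (h⁻¹ * k) = g⁻¹ * k := by group
  rw [e] at this
  exact_mod_cast this

theorem wd_left (S : Set G) (g h k : G) : wordDist S (g * h) (g * k) = wordDist S h k := by
  unfold wordDist
  congr 2
  group

theorem wd_geod (S : Set G) (hS : Subgroup.closure S = ⊤) (x a : G) (t : ℕ)
    (ht : (t : ℝ) ≤ wordDist S x a) :
    ∃ y, wordDist S x y = t ∧ wordDist S y a = wordDist S x a - t := by
  obtain ⟨l, h1, h2, h3⟩ := wl_exists_list S (g := x⁻¹ * a) (by simp [hS])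
  have ht' : t ≤ l.length := by
    unfold wordDist at ht
    rw [h1]; exact_mod_cast ht
  have hsplit : (l.take t).prod * (l.drop t).prod = x⁻¹ * a := by
    rw [← List.prod_append, List.take_append_drop, h3]
  have hx : wordDist S x (x * (l.take t).prod) ≤ t := by
    unfold wordDist
    have := wl_le_of_list S (l.take t) (fun y hy => h2 y (List.mem_of_mem_take hy))
    rw [List.length_take, min_eq_left ht'] at this
    simpa using this
  have hy : wordDist S (x * (l.take t).prod) a ≤ wordDist S x a - t := by
    unfold wordDist
    have := wl_le_of_list S (l.drop t) (fun y hy => h2 y (List.mem_of_mem_drop hy))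
    have e : (x * (l.take t).prod)⁻¹ * a = (l.drop t).prod := by
      rw [mul_inv_rev, mul_assoc, ← hsplit]; group
    rw [e, ← h1]
    rw [List.length_drop] at this
    have h4 : wordLength S (l.drop t).prod + t ≤ l.length := by omega
    have : (wordLength S (l.drop t).prod : ℝ) + t ≤ l.length := by exact_mod_cast h4
    linarith
  have := wd_tri S hS x (x * (l.take t).prod) a
  exact ⟨_, by linarith, by linarith⟩

theorem wl_ball_finite (Y : Set G) (hY : Y.Finite) (n : ℕ) :
    {g : G | g ∈ Subgroup.closure Y ∧ wordLength Y g ≤ n}.Finite := by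
  have hf : (insert 1 (Y ∪ Y⁻¹)).Finite := (hY.union hY.inv).insert 1
  have key : ∀ l : List G, (∀ x ∈ l, x ∈ Y ∨ x⁻¹ ∈ Y) →
      ∀ n, l.length ≤ n → l.prod ∈ (insert 1 (Y ∪ Y⁻¹) : Set G) ^ n := by
    intro l
    induction l with
    | nil =>
      intro _ n _
      exact Set.one_mem_pow (Set.mem_insert _ _)
    | cons a l ih =>
      intro hl n hn
      obtain ⟨m, rfl⟩ : ∃ m, n = m + 1 := ⟨n - 1, by simp at hn; omega⟩
      rw [pow_succ', List.prod_cons]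
      refine Set.mul_mem_mul ?_ (ih (fun x hx => hl x (List.mem_cons_of_mem _ hx)) m
        (by simpa using hn))
      right
      exact hl a List.mem_cons_self
  have hfp : ((insert 1 (Y ∪ Y⁻¹) : Set G) ^ n).Finite := by
    induction n with
    | zero => simp
    | succ n ih => rw [pow_succ]; exact ih.mul hf
  refine hfp.subset ?_
  rintro g ⟨hg, hn⟩
  obtain ⟨l, h1, h2, h3⟩ := wl_exists_list Y hg
  rw [← h3]
  exact key l h2 n (by omega)

/-! ### Hyperbolic estimates -/

theorem chain_prod {α : Type*} (d : α → α → ℝ) (δ : ℝ) (hδ : 0 ≤ δ)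
    (hh : ∀ w x y z : α, min (gromovProd d w x y) (gromovProd d w y z) - δ ≤ gromovProd d w x z)
    (x : α) (B : ℝ) (p : ℕ → α) (n : ℕ) (h0 : ∀ i ≤ n, B ≤ gromovProd d x (p i) (p i))
    (h1 : ∀ i < n, B ≤ gromovProd d x (p i) (p (i + 1))) (k : ℕ) :
    ∀ i m, i + m ≤ n → m ≤ 2 ^ k → B - k * δ ≤ gromovProd d x (p i) (p (i + m)) := by
  induction k with
  | zero =>
    intro i m hi hm
    simp only [pow_zero] at hm
    interval_cases m
    · simpa using h0 i hi
    · simpa using h1 i (by omega)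
  | succ k ih =>
    intro i m hi hm
    rw [pow_succ] at hm
    have a1 := ih i (m / 2) (by omega) (by omega)
    have a2 := ih (i + m / 2) (m - m / 2) (by omega) (by omega)
    rw [show i + m / 2 + (m - m / 2) = i + m by omega] at a2
    have := hh x (p i) (p (i + m / 2)) (p (i + m))
    have h3 := le_min a1 a2
    push_cast
    linarith

theorem exp_bound (A δ μ c : ℝ) (hδ : 0 ≤ δ) (hμ : 0 ≤ μ) :
    ∃ C : ℝ, ∀ r : ℝ, (∀ k : ℕ, 4 * μ * r + c ≤ 2 ^ k → r ≤ A + k * δ) → r ≤ C := by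
  have hlim : Filter.Tendsto (fun k : ℕ => (k : ℝ) ^ 1 / (2 : ℝ) ^ k) Filter.atTop (nhds 0) :=
    tendsto_pow_const_div_const_pow_of_one_lt 1 (by norm_num)
  have hev : ∀ᶠ k : ℕ in Filter.atTop,
      4 * μ * (A + ((k + 1 : ℕ) : ℝ) * δ) + c ≤ (2 : ℝ) ^ k := by
    set P := 4 * μ * δ with hP
    set Q := |4 * μ * (A + δ) + c| with hQ
    have hP0 : 0 ≤ P := by positivity
    have hQ0 : 0 ≤ Q := abs_nonneg _
    have hpos : 0 < (P + Q + 1)⁻¹ := by positivity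
    filter_upwards [hlim.eventually_lt_const hpos, Filter.eventually_ge_atTop 1] with k hk hk1
    have h2 : (0 : ℝ) < 2 ^ k := by positivity
    rw [pow_one, div_lt_iff₀ h2, inv_mul_eq_div, lt_div_iff₀ (by positivity)] at hk
    have hk1' : (1 : ℝ) ≤ k := by exact_mod_cast hk1
    have hle : 4 * μ * (A + δ) + c ≤ Q := le_abs_self _
    push_cast
    have : Q ≤ k * Q := le_mul_of_one_le_left hQ0 hk1'
    nlinarith
  obtain ⟨k0, hk0⟩ := Filter.eventually_atTop.1 hev
  refine ⟨A + k0 * δ, fun r hr => ?_⟩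
  classical
  have hex : ∃ k : ℕ, 4 * μ * r + c ≤ (2 : ℝ) ^ k := by
    obtain ⟨k, hk⟩ := pow_unbounded_of_one_lt (4 * μ * r + c) (by norm_num : (1 : ℝ) < 2)
    exact ⟨k, hk.le⟩
  have hs := Nat.find_spec hex
  have hm := fun m => Nat.find_min (H := hex) (m := m)
  set k := Nat.find hex
  have hrk := hr k hs
  by_cases hkk : k ≤ k0
  · have : (k : ℝ) * δ ≤ k0 * δ := by gcongr
    linarith
  · exfalso
    obtain ⟨j, hj⟩ : ∃ j, k = j + 1 := ⟨k - 1, by omega⟩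
    have h1 := hm j (by omega)
    have h2 := hk0 j (by omega)
    rw [← hj] at h2
    apply h1
    have : 4 * μ * r ≤ 4 * μ * (A + k * δ) := by gcongr
    linarith

/-- Undistorted finitely generated subgroups are quasiconvex. -/
theorem undist_quasiconvex (X : Set G) (hX : Subgroup.closure X = ⊤)
    (hhyp : IsHyperbolicDist (wordDist X)) (H : Subgroup G) (Y : Set G) (hYf : Y.Finite)
    (hYH : Subgroup.closure Y = H) (μ c : ℝ) (hμ : 1 ≤ μ)
    (hq : ∀ h ∈ H, (wordLength Y h : ℝ) ≤ μ * (wordLength X h : ℝ) + c) (E : ℝ) (hE : 0 ≤ E) :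
    ∃ C : ℝ, 0 ≤ C ∧ ∀ a ∈ H, ∀ b ∈ H, ∀ x : G, gromovProd (wordDist X) x a b ≤ E →
      ∃ h ∈ H, wordDist X x h ≤ C := by
  classical
  obtain ⟨δ, hδ, hh⟩ := hhyp
  set d := wordDist X with hd
  have dc : ∀ g h, d g h = d h g := wd_comm X hX
  have dt : ∀ g h k, d g k ≤ d g h + d h k := wd_tri X hX
  have d0 : ∀ g, d g g = 0 := wd_self X
  have dn : ∀ g h, 0 ≤ d g h := wd_nonneg X
  have gpc : ∀ w x y, gromovProd d w x y = gromovProd d w y x := by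
    intro w x y; unfold gromovProd; rw [dc x y]; ring
  -- bound on the lengths of generators
  obtain ⟨M, hM0, hM⟩ : ∃ M : ℝ, 0 ≤ M ∧ ∀ y ∈ Y, (wordLength X y : ℝ) ≤ M := by
    obtain ⟨M, hM⟩ := (hYf.image (fun y => (wordLength X y : ℝ))).bddAbove
    exact ⟨max M 0, le_max_right _ _, fun y hy =>
      (hM (Set.mem_image_of_mem _ hy)).trans (le_max_left _ _)⟩
  obtain ⟨C, hC⟩ := exp_bound (E + 2 * δ + M / 2) δ μ c hδ (by linarith)
  -- the exponential divergence estimate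
  have main : ∀ (x : G) (r : ℝ), (∀ h ∈ H, r ≤ d x h) → ∀ u ∈ H, ∀ v ∈ H,
      d u v ≤ 4 * r → gromovProd d x u v ≤ E + 2 * δ → r ≤ C := by
    intro x r hr u hu v hv huv hg
    apply hC
    intro k hk
    have huvH : u⁻¹ * v ∈ H := H.mul_mem (H.inv_mem hu) hv
    obtain ⟨l, l1, l2, l3⟩ := wl_exists_list Y (g := u⁻¹ * v) (by rw [hYH]; exact huvH)
    have hlen : (l.length : ℝ) ≤ 2 ^ k := by
      rw [l1]
      refine (hq _ huvH).trans (le_trans ?_ hk)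
      have : μ * d u v ≤ μ * (4 * r) := by gcongr
      have e : d u v = (wordLength X (u⁻¹ * v) : ℝ) := rfl
      rw [← e]; linarith
    have hlen' : l.length ≤ 2 ^ k := by exact_mod_cast hlen
    have hmem : ∀ y ∈ l, y ∈ H := by
      intro y hy
      rw [← hYH]
      rcases l2 y hy with h | h
      · exact Subgroup.subset_closure h
      · exact (Subgroup.inv_mem_iff _).1 (Subgroup.subset_closure h)
    set p : ℕ → G := fun i => u * (l.take i).prod with hp
    have hpH : ∀ i, p i ∈ H := fun i => H.mul_mem hu
      (H.list_prod_mem (fun y hy => hmem y (List.mem_of_mem_take hy)))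
    have hstep : ∀ i < l.length, d (p i) (p (i + 1)) ≤ M := by
      intro i hi
      have e1 : p (i + 1) = p i * l[i] := by
        simp only [hp]
        rw [List.prod_take_succ _ _ hi, mul_assoc]
      have e2 : d (p i) (p (i + 1)) = (wordLength X l[i] : ℝ) := by
        rw [e1]; simp [hd, wordDist]
      rw [e2]
      rcases l2 l[i] (List.getElem_mem hi) with h | h
      · exact hM _ h
      · rw [← wl_inv X hX]; exact hM _ h
    have := chain_prod d δ hδ hh x (r - M / 2) p l.length
      (by
        intro i _
        unfold gromovProd
        rw [d0]
        have := hr _ (hpH i)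
        linarith)
      (by
        intro i hi
        unfold gromovProd
        have h1 := hr _ (hpH i)
        have h2 := hr _ (hpH (i + 1))
        have h3 := hstep i hi
        linarith) k 0 l.length (by simp) hlen'
    have e0 : p 0 = u := by simp [hp]
    have e1 : p (0 + l.length) = v := by simp [hp, l3]
    rw [e0, e1] at this
    linarith
  -- one-sided estimate
  have side : ∀ (x : G) (r : ℕ) (a b : G), a ∈ H → b ∈ H → gromovProd d x a b ≤ E →
      (∀ h ∈ H, (r : ℝ) ≤ d x h) → ∀ s ∈ H, d x s = r →
      (∀ y, gromovProd d y a b ≤ E → ∃ h ∈ H, d y h ≤ r) →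
      gromovProd d x a s ≤ E + δ → (r : ℝ) ≤ max C (E + 3 * δ) := by
    intro x r a b ha hb hx hr s hs hxs hmax has
    by_cases hle : d x a ≤ 2 * r
    · refine (main x r hr a ha s hs ?_ (by linarith)).trans (le_max_left _ _)
      have := dt a x s
      rw [dc a x] at this
      have := (Nat.cast_nonneg r : (0 : ℝ) ≤ r)
      linarith
    · push Not at hle
      obtain ⟨y, hy1, hy2⟩ := wd_geod X hX x a (2 * r) (by push_cast; exact hle.le)
      push_cast at hy1 hy2
      change d x y = _ at hy1
      change d y a = d x a - _ at hy2
      have hyE : gromovProd d y a b ≤ E := by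
        unfold gromovProd at hx ⊢
        have := dt y x b
        rw [dc y x] at this
        linarith
      obtain ⟨z, hz, hyz⟩ := hmax y hyE
      have hxz := hr z hz
      have g1 : (r : ℝ) ≤ gromovProd d x a y := by
        unfold gromovProd
        rw [dc a y]
        have := (Nat.cast_nonneg r : (0 : ℝ) ≤ r)
        linarith
      have g2 : (r : ℝ) ≤ gromovProd d x y z := by
        unfold gromovProd; linarith
      have g3 := hh x a y z
      have g4 := le_min g1 g2
      have g5 := hh x a z s
      by_cases hzs : gromovProd d x z s ≤ E + 2 * δ
      · refine (main x r hr z hz s hs ?_ hzs).trans (le_max_left _ _)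
        have h1 := dt z x s
        have h2 := dt x y z
        rw [dc z x] at h1
        linarith
      · push Not at hzs
        refine le_trans ?_ (le_max_right _ _)
        rcases min_le_iff.1 (show min (gromovProd d x a z) (gromovProd d x z s) ≤ E + 2 * δ by
          linarith) with h | h <;> linarith
  refine ⟨max (max C (E + 3 * δ)) 0, le_max_right _ _, ?_⟩
  intro a ha b hb x hx
  -- distance to H as a natural number
  have hdist : ∀ y : G, ∃ n : ℕ, (∃ h ∈ H, d y h = n) ∧ ∀ h ∈ H, (n : ℝ) ≤ d y h := by
    intro y
    have hex : ∃ n : ℕ, ∃ h ∈ H, d y h = n := ⟨wordLength X (y⁻¹ * 1), 1, H.one_mem, rfl⟩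
    refine ⟨Nat.find hex, Nat.find_spec hex, fun h hh => ?_⟩
    have : Nat.find hex ≤ wordLength X (y⁻¹ * h) := Nat.find_min' hex ⟨h, hh, rfl⟩
    change _ ≤ ((wordLength X (y⁻¹ * h) : ℕ) : ℝ)
    exact_mod_cast this
  choose f hf1 hf2 using hdist
  have hbd : BddAbove (f '' {y | gromovProd d y a b ≤ E}) := by
    refine ⟨⌈2 * E + d a b⌉₊, ?_⟩
    rintro _ ⟨y, hy, rfl⟩
    have h1 := hf2 y a ha
    have h2 : d y a ≤ 2 * E + d a b := by
      change gromovProd d y a b ≤ E at hy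
      unfold gromovProd at hy
      have := dn y b
      linarith
    have h3 : (f y : ℝ) ≤ ⌈2 * E + d a b⌉₊ := (h1.trans h2).trans (Nat.le_ceil _)
    exact_mod_cast h3
  have hne : (f '' {y | gromovProd d y a b ≤ E}).Nonempty := ⟨f x, x, hx, rfl⟩
  obtain ⟨w, hw, hwm⟩ := Nat.sSup_mem hne hbd
  have hmax : ∀ y, gromovProd d y a b ≤ E → f y ≤ f w := by
    intro y hy
    rw [hwm]
    exact le_csSup hbd ⟨y, hy, rfl⟩
  have hmax' : ∀ y, gromovProd d y a b ≤ E → ∃ h ∈ H, d y h ≤ f w := by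
    intro y hy
    obtain ⟨h, hh, e⟩ := hf1 y
    exact ⟨h, hh, by rw [e]; exact_mod_cast hmax y hy⟩
  change gromovProd d w a b ≤ E at hw
  have hfw : (f w : ℝ) ≤ max C (E + 3 * δ) := by
    obtain ⟨s, hs, hws⟩ := hf1 w
    have h4 := hh w a s b
    rcases min_le_iff.1 (show min (gromovProd d w a s) (gromovProd d w s b) ≤ E + δ by
      linarith) with h | h
    · exact side w (f w) a b ha hb hw (hf2 w) s hs hws hmax' h
    · refine side w (f w) b a hb ha (by rw [gpc]; exact hw) (hf2 w) s hs hws ?_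
        (by rw [gpc]; exact h)
      intro y hy
      exact hmax' y (by rw [gpc]; exact hy)
  obtain ⟨h, hhH, e⟩ := hmax' x hx
  exact ⟨h, hhH, e.trans (hfw.trans (le_max_left _ _))⟩

end Aux

/-- **Algebraic intersection coincides coarsely with geometric intersection.** For every
`R ≥ 0`, the Hausdorff distance between `H₁ ∩ N_R(H₂)` and `H₁ ∩ H₂` is finite. -/
theorem coarse_intersection_eq_intersection {G : Type*} [Group G] (X : Set G)
    (hXgen : Subgroup.closure X = ⊤) (hhyp : IsHyperbolicDist (wordDist X))
    (H₁ H₂ : Subgroup G)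
    (he₁ : IsHypEmbFamily X (fun _ : Fin 1 => H₁))
    (he₂ : IsHypEmbFamily X (fun _ : Fin 1 => H₂)) :
    ∀ R : ℝ, 0 ≤ R → ∃ r : ℝ,
      (H₁ : Set G) ∩ nbhd X R (H₂ : Set G) ⊆ nbhd X r ((H₁ : Set G) ∩ (H₂ : Set G)) ∧
      (H₁ : Set G) ∩ (H₂ : Set G) ⊆ nbhd X r ((H₁ : Set G) ∩ nbhd X R (H₂ : Set G)) := by
  classical
  intro R hR
  obtain ⟨-, Y₁, hY₁, μ₁, c₁, hμ₁, hc₁, hq₁⟩ := he₁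
  obtain ⟨hsep, Y₂, hY₂, μ₂, c₂, hμ₂, hc₂, hq₂⟩ := he₂
  obtain ⟨hYf₁, -, hYc₁⟩ := hY₁ 0
  obtain ⟨hYf₂, -, hYc₂⟩ := hY₂ 0
  have hq₁ := hq₁ 0
  have hq₂ := hq₂ 0
  obtain ⟨C₁, hC₁, hqc₁⟩ := undist_quasiconvex X hXgen hhyp H₁ (Y₁ 0) hYf₁ hYc₁ μ₁ c₁ hμ₁ hq₁
    0 le_rfl
  obtain ⟨C₂, hC₂, hqc₂⟩ := undist_quasiconvex X hXgen hhyp H₂ (Y₂ 0) hYf₂ hYc₂ μ₂ c₂ hμ₂ hq₂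
    R hR
  have dc := wd_comm X hXgen
  have dt := wd_tri X hXgen
  have d0 := wd_self X
  set C : ℝ := C₁ + C₂ + R + 1 with hC
  have hCpos : 0 < C := by positivity
  obtain ⟨D, hD⟩ := hsep (2 * C) (by positivity)
  obtain ⟨T, hT⟩ := exists_nat_ge (D + 2 * C + C₁)
  -- property of a pair `(h, u)`
  set P : G → G → Prop := fun h u => h ∈ H₁ ∧ (∃ k ∈ H₂, wordDist X h k ≤ C) ∧
    (∃ k ∈ H₂, wordDist X (h * u) k ≤ C) with hP
  set F : Set G := {u | u ∈ H₁ ∧ (wordLength X u : ℝ) ≤ T + C₁ ∧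
    D + 2 * C ≤ (wordLength X u : ℝ)} with hF
  have hFfin : F.Finite := by
    obtain ⟨n, hn⟩ := exists_nat_ge (μ₁ * (T + C₁) + c₁)
    refine (wl_ball_finite (Y₁ 0) hYf₁ n).subset ?_
    rintro u ⟨hu, hu1, -⟩
    refine ⟨by rw [hYc₁]; exact hu, ?_⟩
    have h1 := hq₁ u hu
    have h2 : μ₁ * (wordLength X u : ℝ) ≤ μ₁ * (T + C₁) := by gcongr
    have : (wordLength (Y₁ 0) u : ℝ) ≤ n := by linarith
    exact_mod_cast this
  have hsame : ∀ h g u, u ∈ F → P h u → P g u → h * g⁻¹ ∈ H₂ := by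
    rintro h g u ⟨hu, -, hu2⟩ ⟨-, ⟨k1, hk1, e1⟩, ⟨k2, hk2, e2⟩⟩ ⟨-, ⟨l1, hl1, e3⟩, ⟨l2, hl2, e4⟩⟩
    refine (hD (h * g⁻¹) 0 0 ⟨k1, ⟨hk1, h * g⁻¹ * l1, ?_, ?_⟩, k2, ⟨hk2, h * g⁻¹ * l2, ?_, ?_⟩,
      ?_⟩).2
    · exact Set.smul_mem_smul_set (a := h * g⁻¹) hl1
    · have t1 := dt k1 h (h * g⁻¹ * l1)
      have t2 := wd_left X (h * g⁻¹) g l1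
      rw [show h * g⁻¹ * g = h by group] at t2
      rw [dc k1 h] at t1
      linarith
    · exact Set.smul_mem_smul_set (a := h * g⁻¹) hl2
    · have t1 := dt k2 (h * u) (h * g⁻¹ * l2)
      have t2 := wd_left X (h * g⁻¹) (g * u) l2
      rw [show h * g⁻¹ * (g * u) = h * u by group] at t2
      rw [dc k2 (h * u)] at t1
      linarith
    · have t1 := dt h k1 (h * u)
      have t2 := dt k1 k2 (h * u)
      rw [dc k2 (h * u)] at t2
      have t3 : wordDist X h (h * u) = (wordLength X u : ℝ) := by simp [wordDist]
      linarith
  have hbound : ∀ u : G, ∃ r : ℝ, u ∈ F → ∀ h, P h u → ∃ k ∈ (H₁ : Set G) ∩ (H₂ : Set G),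
      wordDist X h k ≤ r := by
    intro u
    by_cases hg : ∃ g, P g u
    · obtain ⟨g, hg⟩ := hg
      refine ⟨(wordLength X g⁻¹ : ℝ), fun hu h hh => ⟨h * g⁻¹, ⟨H₁.mul_mem hh.1
        (H₁.inv_mem hg.1), hsame h g u hu hh hg⟩, ?_⟩⟩
      simp [wordDist]
    · exact ⟨0, fun _ h hh => absurd ⟨h, hh⟩ hg⟩
  choose r hr using hbound
  obtain ⟨B, hB⟩ := (hFfin.image r).bddAbove
  refine ⟨max (max B T) 0, ?_, ?_⟩
  · rintro h ⟨hh1, k, hk, hhk⟩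
    by_cases hlt : wordDist X h 1 ≤ T
    · exact ⟨1, ⟨H₁.one_mem, H₂.one_mem⟩, hlt.trans ((le_max_right _ _).trans (le_max_left _ _))⟩
    · push Not at hlt
      obtain ⟨x, hx1, hx2⟩ := wd_geod X hXgen h 1 T hlt.le
      obtain ⟨a, ha, hxa⟩ := hqc₁ h hh1 1 H₁.one_mem x (by
        unfold gromovProd
        rw [dc x h]
        linarith)
      obtain ⟨b, hb, hxb⟩ := hqc₂ k hk 1 H₂.one_mem x (by
        unfold gromovProd
        have t1 := dt x h k
        have t2 := dt h k 1
        rw [dc x h] at t1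
        linarith)
      set u := h⁻¹ * a with hu
      have hul : (wordLength X u : ℝ) = wordDist X h a := rfl
      have huF : u ∈ F := by
        refine ⟨H₁.mul_mem (H₁.inv_mem hh1) ha, ?_, ?_⟩
        · rw [hul]
          have := dt h x a
          linarith
        · rw [hul]
          have := dt h a x
          rw [dc a x] at this
          linarith
      have hPu : P h u := by
        refine ⟨hh1, ⟨k, hk, by rw [hC]; linarith⟩, ⟨b, hb, ?_⟩⟩
        rw [hu, mul_inv_cancel_left]
        have := dt a x b
        rw [dc a x] at this
        rw [hC]; linarith
      obtain ⟨q, hq, hle⟩ := hr u huF h hPu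
      exact ⟨q, hq, hle.trans ((hB (Set.mem_image_of_mem _ huF)).trans
        ((le_max_left _ _).trans (le_max_left _ _)))⟩
  · rintro h ⟨hh1, hh2⟩
    exact ⟨h, ⟨hh1, h, hh2, by rw [d0]; exact hR⟩, by rw [d0]; exact le_max_right _ _⟩
end

section
/- Let G be a group with generating set X such that the Cayley graph Γ(G,X) is hyperbolic, and suppose the family {H_λ}_{λ∈Λ} of subgroups is hyperbolically embedded in (G,X). Then each H_λ satisfies the WPD condition in (G,X). -/
open Pointwise

theorem list_prod_mem_pow {G : Type*} [Group G] (A : Set G) (l : List G)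
    (hl : ∀ x ∈ l, x ∈ A) : l.prod ∈ A ^ l.length := by
  induction l with
  | nil => simp
  | cons a l ih =>
    rw [List.prod_cons, List.length_cons, pow_succ']
    exact Set.mul_mem_mul (hl a (by simp)) (ih fun x hx => hl x (by simp [hx]))

theorem finite_pow_set {G : Type*} [Group G] (A : Set G) (hA : A.Finite) (n : ℕ) :
    (A ^ n).Finite := by
  induction n with
  | zero => rw [pow_zero]; exact Set.finite_one
  | succ n ih => rw [pow_succ]; exact ih.mul hA

theorem finite_wordLength_ball {G : Type*} [Group G] (Y : Set G) (hY : Y.Finite) (M : ℕ) :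
    {h : G | h ∈ Subgroup.closure Y ∧ wordLength Y h ≤ M}.Finite := by
  have hA : (Y ∪ Y⁻¹).Finite := hY.union hY.inv
  refine (Set.Finite.biUnion (Set.finite_Iic M)
    (fun n _ => finite_pow_set (Y ∪ Y⁻¹) hA n)).subset ?_
  rintro h ⟨hh, hM⟩
  have hne : {n : ℕ | ∃ l : List G, l.length = n ∧ (∀ x ∈ l, x ∈ Y ∨ x⁻¹ ∈ Y) ∧
      l.prod = h}.Nonempty := by
    rw [← Subgroup.mem_toSubmonoid, Subgroup.closure_toSubmonoid] at hh
    obtain ⟨l, h1, h2⟩ := Submonoid.exists_list_of_mem_closure hh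
    exact ⟨l.length, l, rfl, h1, h2⟩
  obtain ⟨l, h1, h2, h3⟩ := Nat.sInf_mem hne
  refine Set.mem_biUnion (x := wordLength Y h) hM ?_
  have := list_prod_mem_pow (Y ∪ Y⁻¹) l (fun x hx => h2 x hx)
  rw [h3, h1] at this
  exact this

/-- **Hyperbolically embedded subgroups satisfy the WPD condition.** -/
theorem wpd_of_hyperbolically_embedded {G : Type*} [Group G] {Λ : Type*} (X : Set G)
    (hXgen : Subgroup.closure X = ⊤) (hhyp : IsHyperbolicDist (wordDist X))
    (H : Λ → Subgroup G) (he : IsHypEmbFamily X H) :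
    ∀ lam : Λ, WPDSet X (H lam : Set G) := by
  intro lam ε hε
  obtain ⟨hQ1, Y, hY, μ, c, hμ, hc, hQ3⟩ := he
  obtain ⟨R, hR⟩ := hQ1 ε hε
  refine ⟨max R 1, by positivity, fun h₁ h₂ hh₁ hh₂ hN => ?_⟩
  obtain ⟨hfin, hsub, hcl⟩ := hY lam
  obtain ⟨M, hM⟩ := exists_nat_ge (μ * ε + c)
  have hB := finite_wordLength_ball (Y lam) hfin M
  refine (hB.image fun k => h₁ * k * h₁⁻¹).subset ?_
  rintro g ⟨hg₁, hg₂⟩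
  have hg : g ∈ H lam :=
    (hR g lam lam ⟨h₁, ⟨hh₁, g * h₁, Set.smul_mem_smul_set hh₁, hg₁.le⟩,
      h₂, ⟨hh₂, g * h₂, Set.smul_mem_smul_set hh₂, hg₂.le⟩,
      (le_max_left _ _).trans hN.le⟩).2
  have hk : h₁⁻¹ * (g * h₁) ∈ H lam :=
    (H lam).mul_mem ((H lam).inv_mem hh₁) ((H lam).mul_mem hg hh₁)
  refine ⟨h₁⁻¹ * (g * h₁), ⟨by rw [hcl]; exact hk, ?_⟩, by group⟩
  have h3 := hQ3 lam _ hk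
  have h4 : (wordLength X (h₁⁻¹ * (g * h₁)) : ℝ) ≤ ε := hg₁.le
  have h5 : (wordLength (Y lam) (h₁⁻¹ * (g * h₁)) : ℝ) ≤ M := by nlinarith
  exact_mod_cast h5
end
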